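/- Let N₁, N₂ be commuting bounded operators on a Hilbert space with N₁² + N₂² = 1. Assign to each edge of the hexagonal graph on S₃ the operators: Q_{1,s₁} = N₁, Q_{1,s₂} = N₂, Q_{s₁,s₁s₂} = -N₁N₂, Q_{s₁,s₂s₁} = -N₂², Q_{s₂,s₂s₁} = N₁N₂, Q_{s₂,s₁s₂} = N₁², Q_{s₁s₂,w_ρ} = -N₂, Q_{s₂s₁,w_ρ} = N₁ (and Q_{w',w} = Q_{w,w'}). Then for all w, w'' in S₃: Σ_{w' : w↔w'↔w''} Q_{w',w''} Q_{w,w'} = δ_{w,w''} · 1, where the sum runs over vertices w' adjacent to both w and w''. -/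

import Mathlib

open scoped Classical

/-- The simple reflection `s₁` of `S₃`. -/
def s1 : Equiv.Perm (Fin 3) := Equiv.swap 0 1

/-- The simple reflection `s₂` of `S₃`. -/
def s2 : Equiv.Perm (Fin 3) := Equiv.swap 1 2

/-- The longest element `w_ρ = s₁s₂s₁`. -/
def wρ : Equiv.Perm (Fin 3) := s1 * s2 * s1

/-- The (unordered) edges of the hexagonal Bruhat graph of `S₃`. -/
def hexAdj (w w' : Equiv.Perm (Fin 3)) : Prop :=
  ((w, w') : Equiv.Perm (Fin 3) × Equiv.Perm (Fin 3)) ∈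
    ({(1, s1), (s1, 1), (1, s2), (s2, 1),
      (s1, s1 * s2), (s1 * s2, s1), (s1, s2 * s1), (s2 * s1, s1),
      (s2, s2 * s1), (s2 * s1, s2), (s2, s1 * s2), (s1 * s2, s2),
      (s1 * s2, wρ), (wρ, s1 * s2), (s2 * s1, wρ), (wρ, s2 * s1)} :
      Set (Equiv.Perm (Fin 3) × Equiv.Perm (Fin 3)))

/-!
Even and odd permutations split the hexagonal graph into two parts of three vertices, so its
weighted adjacency matrix has the form `[[0, Bᵀ], [B, 0]]`, and its square is the identity exactly
when `B` is orthogonal. Writing `N₁ = cos θ` and `N₂ = sin θ`, one finds that `B` is the product of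
the rotation by `θ` in the first coordinate plane and the rotation by `-θ` in the second one.
-/

open Matrix

section WeightedAdjacency

variable {V R : Type*}

/-- The adjacency matrix of the relation `r`, in which the edge from `v` to `w` carries the
weight `Q v w`. -/
noncomputable def weightedAdjMatrix [Zero R] (r : V → V → Prop) (Q : V → V → R) : Matrix V V R :=
  of fun v w => if r v w then Q v w else 0

theorem weightedAdjMatrix_isSymm [Zero R] {r : V → V → Prop} {Q : V → V → R}
    (hr : ∀ v w, r v w ↔ r w v) (hQ : ∀ v w, Q v w = Q w v) :
    (weightedAdjMatrix r Q).IsSymm := by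
  ext v w
  simp only [weightedAdjMatrix, transpose_apply, of_apply, hr w v, hQ w v]

theorem sum_paths_eq_weightedAdjMatrix_mul_self_apply [Fintype V] [NonUnitalNonAssocSemiring R]
    {r : V → V → Prop} {Q : V → V → R} (hr : ∀ v w, r v w ↔ r w v) (hQ : ∀ v w, Q v w = Q w v)
    (u w : V) :
    (∑ v, if r u v ∧ r v w then Q v w * Q u v else 0) =
      (weightedAdjMatrix r Q * weightedAdjMatrix r Q) w u := by
  have hsymm := weightedAdjMatrix_isSymm hr hQ
  rw [mul_apply]
  refine Finset.sum_congr rfl fun v _ => ?_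
  rw [hsymm.apply v w, hsymm.apply u v]
  by_cases huv : r u v <;> by_cases hvw : r v w <;> simp [weightedAdjMatrix, huv, hvw]

end WeightedAdjacency

theorem fromBlocks_antidiagonal_mul_self {m n R : Type*} [Fintype m] [Fintype n] [DecidableEq m]
    [DecidableEq n] [NonAssocSemiring R] {A : Matrix m n R} {B : Matrix n m R}
    (hAB : A * B = 1) (hBA : B * A = 1) :
    fromBlocks 0 A B 0 * fromBlocks 0 A B 0 = 1 := by
  simp only [fromBlocks_multiply, Matrix.mul_zero, Matrix.zero_mul, zero_add, add_zero, hAB, hBA,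
    fromBlocks_one]

section Rotation

variable {R : Type*} [Ring R]

/-- The rotation with cosine `c` and sine `s` in the plane of the coordinates `0` and `1`. -/
def rotation₀₁ (c s : R) : Matrix (Fin 3) (Fin 3) R :=
  !![c, -s, 0; s, c, 0; 0, 0, 1]

/-- The rotation with cosine `c` and sine `s` in the plane of the coordinates `1` and `2`. -/
def rotation₁₂ (c s : R) : Matrix (Fin 3) (Fin 3) R :=
  !![1, 0, 0; 0, c, -s; 0, s, c]

/-- The weights of the edges from the odd permutations `s₁, s₂, w_ρ` (rows) to the even
permutations `1, s₁s₂, s₂s₁` (columns); the entry `0` stands for the missing edge between `1`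
and `w_ρ`. -/
def hexBlock (a b : R) : Matrix (Fin 3) (Fin 3) R :=
  !![a, -(a * b), -b ^ 2; b, a ^ 2, a * b; 0, -b, a]

variable {a b : R}

theorem rotation₀₁_mul_rotation₀₁_neg (hab : Commute a b) (h : a ^ 2 + b ^ 2 = 1) :
    rotation₀₁ a b * rotation₀₁ a (-b) = 1 := by
  have h' : b ^ 2 + a ^ 2 = 1 := by rwa [add_comm]
  rw [sq, sq] at h h'
  ext i j
  fin_cases i <;> fin_cases j <;> simp [rotation₀₁, mul_apply, Fin.sum_univ_three, hab.eq, h, h']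

theorem rotation₁₂_mul_rotation₁₂_neg (hab : Commute a b) (h : a ^ 2 + b ^ 2 = 1) :
    rotation₁₂ a b * rotation₁₂ a (-b) = 1 := by
  have h' : b ^ 2 + a ^ 2 = 1 := by rwa [add_comm]
  rw [sq, sq] at h h'
  ext i j
  fin_cases i <;> fin_cases j <;> simp [rotation₁₂, mul_apply, Fin.sum_univ_three, hab.eq, h, h']

theorem hexBlock_eq_mul (hab : Commute a b) :
    hexBlock a b = rotation₀₁ a b * rotation₁₂ a (-b) := by
  simp [hexBlock, rotation₀₁, rotation₁₂, hab.eq, sq]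

theorem transpose_hexBlock_eq_mul (hab : Commute a b) :
    (hexBlock a b)ᵀ = rotation₁₂ a b * rotation₀₁ a (-b) := by
  ext i j
  fin_cases i <;> fin_cases j <;>
    simp [hexBlock, rotation₀₁, rotation₁₂, mul_apply, Fin.sum_univ_three, hab.eq, sq]

theorem hexBlock_mul_transpose (hab : Commute a b) (h : a ^ 2 + b ^ 2 = 1) :
    hexBlock a b * (hexBlock a b)ᵀ = 1 := by
  have h' : a ^ 2 + (-b) ^ 2 = 1 := by rwa [neg_sq]
  have h₁₂ : rotation₁₂ a (-b) * rotation₁₂ a b = 1 := by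
    simpa only [neg_neg] using rotation₁₂_mul_rotation₁₂_neg hab.neg_right h'
  calc hexBlock a b * (hexBlock a b)ᵀ
      = rotation₀₁ a b * (rotation₁₂ a (-b) * rotation₁₂ a b) * rotation₀₁ a (-b) := by
        rw [transpose_hexBlock_eq_mul hab, hexBlock_eq_mul hab]
        simp only [Matrix.mul_assoc]
    _ = 1 := by rw [h₁₂, Matrix.mul_one, rotation₀₁_mul_rotation₀₁_neg hab h]

theorem transpose_hexBlock_mul (hab : Commute a b) (h : a ^ 2 + b ^ 2 = 1) :
    (hexBlock a b)ᵀ * hexBlock a b = 1 := by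
  have h' : a ^ 2 + (-b) ^ 2 = 1 := by rwa [neg_sq]
  have h₀₁ : rotation₀₁ a (-b) * rotation₀₁ a b = 1 := by
    simpa only [neg_neg] using rotation₀₁_mul_rotation₀₁_neg hab.neg_right h'
  calc (hexBlock a b)ᵀ * hexBlock a b
      = rotation₁₂ a b * (rotation₀₁ a (-b) * rotation₀₁ a b) * rotation₁₂ a (-b) := by
        rw [transpose_hexBlock_eq_mul hab, hexBlock_eq_mul hab]
        simp only [Matrix.mul_assoc]
    _ = 1 := by rw [h₀₁, Matrix.mul_one, rotation₁₂_mul_rotation₁₂_neg hab h]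

end Rotation

section HexagonalGraph

/-- The even permutations `1, s₁s₂, s₂s₁`, in the order of the columns of `hexBlock`. -/
def evenVertex : Fin 3 → Equiv.Perm (Fin 3) :=
  ![1, s1 * s2, s2 * s1]

/-- The odd permutations `s₁, s₂, w_ρ`, in the order of the rows of `hexBlock`. -/
def oddVertex : Fin 3 → Equiv.Perm (Fin 3) :=
  ![s1, s2, wρ]

theorem bijective_elim_evenVertex_oddVertex :
    Function.Bijective (Sum.elim evenVertex oddVertex) := by
  decide

/-- The vertices of the hexagonal graph, split by parity: even ones on the left, odd ones on the
right. -/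
noncomputable def hexVertex : Fin 3 ⊕ Fin 3 ≃ Equiv.Perm (Fin 3) :=
  Equiv.ofBijective _ bijective_elim_evenVertex_oddVertex

-- At the default size bound, the search for a decidability instance of the 16-fold disjunction
-- falls back on `Classical.propDecidable`, which `decide` cannot evaluate.
set_option synthInstance.maxSize 1024 in
theorem hexAdj_iff (w w' : Equiv.Perm (Fin 3)) :
    hexAdj w w' ↔ w.sign ≠ w'.sign ∧ s(w, w') ≠ s(1, wρ) := by
  simp only [hexAdj, Set.mem_insert_iff, Set.mem_singleton_iff]
  revert w w'
  decide

theorem hexAdj_comm (w w' : Equiv.Perm (Fin 3)) : hexAdj w w' ↔ hexAdj w' w := by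
  rw [hexAdj_iff, hexAdj_iff, ne_comm, Sym2.eq_swap]

theorem sign_evenVertex : ∀ i, (evenVertex i).sign = 1 := by
  decide

theorem sign_oddVertex : ∀ i, (oddVertex i).sign = -1 := by
  decide

theorem not_hexAdj_of_sign_eq {w w' : Equiv.Perm (Fin 3)} (h : w.sign = w'.sign) :
    ¬ hexAdj w w' := by
  simp only [hexAdj_iff, h, ne_eq, not_true_eq_false, false_and, not_false_eq_true]

theorem hexAdj_oddVertex_evenVertex (i j : Fin 3) :
    hexAdj (oddVertex i) (evenVertex j) ↔ ¬ (i = 2 ∧ j = 0) := by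
  rw [hexAdj_iff]
  revert i j
  decide

theorem weightedAdjMatrix_hexAdj_submatrix {R : Type*} [Zero R]
    {Q : Equiv.Perm (Fin 3) → Equiv.Perm (Fin 3) → R} (hQ : ∀ w w', Q w w' = Q w' w)
    {B : Matrix (Fin 3) (Fin 3) R}
    (hB : ∀ i j, B i j = if i = 2 ∧ j = 0 then 0 else Q (oddVertex i) (evenVertex j)) :
    (weightedAdjMatrix hexAdj Q).submatrix hexVertex hexVertex = fromBlocks 0 Bᵀ B 0 := by
  ext (i | i) (j | j)
  · simp [weightedAdjMatrix, hexVertex, not_hexAdj_of_sign_eq, sign_evenVertex]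
  · simp [weightedAdjMatrix, hexVertex, hexAdj_comm (evenVertex i), hQ (evenVertex i),
      hexAdj_oddVertex_evenVertex, hB, -not_and]
  · simp [weightedAdjMatrix, hexVertex, hexAdj_oddVertex_evenVertex, hB, -not_and]
  · simp [weightedAdjMatrix, hexVertex, not_hexAdj_of_sign_eq, sign_oddVertex]

theorem weightedAdjMatrix_hexAdj_mul_self {R : Type*} [NonAssocSemiring R]
    {Q : Equiv.Perm (Fin 3) → Equiv.Perm (Fin 3) → R} (hQ : ∀ w w', Q w w' = Q w' w)
    {B : Matrix (Fin 3) (Fin 3) R}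
    (hB : ∀ i j, B i j = if i = 2 ∧ j = 0 then 0 else Q (oddVertex i) (evenVertex j))
    (hBt : B * Bᵀ = 1) (htB : Bᵀ * B = 1) :
    weightedAdjMatrix hexAdj Q * weightedAdjMatrix hexAdj Q = 1 := by
  apply (reindex hexVertex.symm hexVertex.symm).injective
  simp only [reindex_apply, Equiv.symm_symm]
  rw [← submatrix_mul_equiv _ _ _ hexVertex, weightedAdjMatrix_hexAdj_submatrix hQ hB,
    fromBlocks_antidiagonal_mul_self htB hBt, submatrix_one_equiv]

end HexagonalGraph

theorem stmt11_general {R : Type*} [Ring R] (N₁ N₂ : R)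
    (hcomm : N₁ * N₂ = N₂ * N₁) (hsum : N₁ ^ 2 + N₂ ^ 2 = 1)
    (Q : Equiv.Perm (Fin 3) → Equiv.Perm (Fin 3) → R)
    (hQsymm : ∀ w w', Q w w' = Q w' w)
    (h1 : Q 1 s1 = N₁) (h2 : Q 1 s2 = N₂)
    (h3 : Q s1 (s1 * s2) = -(N₁ * N₂)) (h4 : Q s1 (s2 * s1) = -(N₂ ^ 2))
    (h5 : Q s2 (s2 * s1) = N₁ * N₂) (h6 : Q s2 (s1 * s2) = N₁ ^ 2)
    (h7 : Q (s1 * s2) wρ = -N₂) (h8 : Q (s2 * s1) wρ = N₁) :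
    ∀ w w'' : Equiv.Perm (Fin 3),
      (∑ w' : Equiv.Perm (Fin 3),
        if hexAdj w w' ∧ hexAdj w' w'' then Q w' w'' * Q w w' else 0)
      = if w = w'' then 1 else 0 := by
  intro w w''
  have hQ_block (i j : Fin 3) : hexBlock N₁ N₂ i j =
      if i = 2 ∧ j = 0 then 0 else Q (oddVertex i) (evenVertex j) := by
    fin_cases i <;> fin_cases j <;>
      simp [hexBlock, oddVertex, evenVertex, h1, h2, h3, h4, h5, h6, h7, h8,
        hQsymm s1 1, hQsymm s2 1, hQsymm wρ]
  rw [sum_paths_eq_weightedAdjMatrix_mul_self_apply hexAdj_comm hQsymm,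
    weightedAdjMatrix_hexAdj_mul_self hQsymm hQ_block (hexBlock_mul_transpose hcomm hsum)
      (transpose_hexBlock_mul hcomm hsum), one_apply]
  exact if_congr eq_comm rfl rfl

/-- Let `N₁, N₂` be commuting bounded operators with `N₁² + N₂² = 1`, and assign operators
`Q_{w,w'}` to the edges of the hexagonal Bruhat graph of `S₃` as indicated.  Then for all
`w, w''`:  `Σ_{w' : w↔w'↔w''} Q_{w',w''} Q_{w,w'} = δ_{w,w''}`. -/
theorem stmt11 {H : Type*} [NormedAddCommGroup H] [InnerProductSpace ℂ H] [CompleteSpace H]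
    (N₁ N₂ : H →L[ℂ] H) (hcomm : N₁ * N₂ = N₂ * N₁) (hsum : N₁ ^ 2 + N₂ ^ 2 = 1)
    (Q : Equiv.Perm (Fin 3) → Equiv.Perm (Fin 3) → (H →L[ℂ] H))
    (hQsymm : ∀ w w', Q w w' = Q w' w)
    (h1 : Q 1 s1 = N₁) (h2 : Q 1 s2 = N₂)
    (h3 : Q s1 (s1 * s2) = -(N₁ * N₂)) (h4 : Q s1 (s2 * s1) = -(N₂ ^ 2))
    (h5 : Q s2 (s2 * s1) = N₁ * N₂) (h6 : Q s2 (s1 * s2) = N₁ ^ 2)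
    (h7 : Q (s1 * s2) wρ = -N₂) (h8 : Q (s2 * s1) wρ = N₁) :
    ∀ w w'' : Equiv.Perm (Fin 3),
      (∑ w' : Equiv.Perm (Fin 3),
        if hexAdj w w' ∧ hexAdj w' w'' then Q w' w'' * Q w w' else 0)
      = if w = w'' then 1 else 0 :=
  stmt11_general N₁ N₂ hcomm hsum Q hQsymm h1 h2 h3 h4 h5 h6 h7 h8
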